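/- The identity (32/π²) · ∫₀^{π/2} ∫₀^{π/2} ∫₀^{π/2} cos²ψ · sin φ · sin²ψ dψ dφ dθ + (96/π²) · ∫₀^{π/2} ∫₀^{π/2} ∫₀^{π/2} cos φ · sin ψ · cos ψ · sin φ · sin²ψ dψ dφ dθ = 1 + 6/π holds. (This is the second moment E(vl²) of the projected volume of a unit 4-cube onto a uniformly random 3-subspace.) -/

import Mathlib

open Real

/-!
For `(x, y, z, w)` uniform on the unit sphere, the symmetries of the sphere give
`E((|x| + |y| + |z| + |w|)²) = 4 E(w²) + 12 E(|z w|)`, and each of these expectations is 16 times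
its part over the positive orthant; with the density `sin φ sin² ψ / (2π²)` this is where the
constants `32/π²` and `96/π²` come from. In spherical coordinates both integrands separate, which
leaves integrals of `sin^m cos^n` over `[0, π/2]`.
-/

theorem intervalIntegral_intervalIntegral_mul {𝕜 : Type*} [RCLike 𝕜]
    (μ ν : MeasureTheory.Measure ℝ) (f g : ℝ → 𝕜) (a b c d : ℝ) :
    ∫ x in a..b, ∫ y in c..d, f x * g y ∂ν ∂μ =
      (∫ x in a..b, f x ∂μ) * ∫ y in c..d, g y ∂ν := by
  rw [← intervalIntegral.integral_mul_const]
  simp only [intervalIntegral.integral_const_mul]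

theorem integral_sin_pow_mul_cos (n : ℕ) (a b : ℝ) :
    ∫ x in a..b, sin x ^ n * cos x = (sin b ^ (n + 1) - sin a ^ (n + 1)) / (n + 1) := by
  simpa using integral_sin_pow_mul_cos_pow_odd (a := a) (b := b) n 0

theorem integral_sin_pow_mul_cos_zero_pi_div_two (n : ℕ) :
    ∫ x in 0..π / 2, sin x ^ n * cos x = 1 / (n + 1) := by
  simp [integral_sin_pow_mul_cos]

theorem integral_sin_sq_mul_cos_sq_zero_pi_div_two :
    ∫ x in 0..π / 2, sin x ^ 2 * cos x ^ 2 = π / 16 := by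
  have sin_four_mul : sin (4 * (π / 2)) = 0 := by
    rw [show 4 * (π / 2) = 2 * π by ring, sin_two_pi]
  rw [integral_sin_sq_mul_cos_sq, sin_four_mul, mul_zero, sin_zero]
  ring

theorem integral_sin_zero_pi_div_two : ∫ x in 0..π / 2, sin x = 1 := by
  rw [integral_sin, cos_zero, cos_pi_div_two, sub_zero]

/-- The second moment `E(vl²)` of the projected volume of a unit 4-cube onto a
uniformly random 3-subspace equals `1 + 6/π`. -/
theorem second_moment_volume_projection_4cube :
    (32 / π ^ 2) *
      (∫ _θ in (0:ℝ)..(π/2), ∫ φ in (0:ℝ)..(π/2), ∫ ψ in (0:ℝ)..(π/2),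
        Real.cos ψ ^ 2 * Real.sin φ * Real.sin ψ ^ 2)
    + (96 / π ^ 2) *
      (∫ _θ in (0:ℝ)..(π/2), ∫ φ in (0:ℝ)..(π/2), ∫ ψ in (0:ℝ)..(π/2),
        Real.cos φ * Real.sin ψ * Real.cos ψ * Real.sin φ * Real.sin ψ ^ 2)
    = 1 + 6 / π := by
  have square_term : ∫ φ in 0..π / 2, ∫ ψ in 0..π / 2, cos ψ ^ 2 * sin φ * sin ψ ^ 2 = π / 16 := by
    calc
      _ = ∫ φ in 0..π / 2, ∫ ψ in 0..π / 2, sin φ * (sin ψ ^ 2 * cos ψ ^ 2) := by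
        congr! 4; ring
      _ = 1 * (π / 16) := by
        rw [intervalIntegral_intervalIntegral_mul, integral_sin_zero_pi_div_two,
          integral_sin_sq_mul_cos_sq_zero_pi_div_two]
      _ = π / 16 := one_mul _
  have cross_term : ∫ φ in 0..π / 2, ∫ ψ in 0..π / 2,
      cos φ * sin ψ * cos ψ * sin φ * sin ψ ^ 2 = 1 / 8 := by
    calc
      _ = ∫ φ in 0..π / 2, ∫ ψ in 0..π / 2, (sin φ ^ 1 * cos φ) * (sin ψ ^ 3 * cos ψ) := by
        congr! 4; ring
      _ = 1 / ((1 : ℕ) + 1) * (1 / ((3 : ℕ) + 1)) := by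
        simp_rw [intervalIntegral_intervalIntegral_mul, integral_sin_pow_mul_cos_zero_pi_div_two]
      _ = 1 / 8 := by norm_num
  rw [square_term, cross_term]
  simp only [intervalIntegral.integral_const, smul_eq_mul, sub_zero]
  field_simp
  ring
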